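/- (Localisation.) Let h ≥ 0 with h ≠ 1, let ε > 0 and d ∈ D_α. Then for every φ ∈ 𝒜_h(d) there exist ψ ∈ 𝒜_h(d) and R > 0 such that E_h(ψ) ≤ E_h(φ) + ε, ψ is constant on (−∞, −R], and ψ is constant on [R, ∞). -/

import Mathlib

/-!
Replace the tails of `φ` by its limits `L±`: let `ψₙ` (`cutoff`) equal `φ` on `[-n, n]`,
interpolate smoothly towards `L±` over an interval of length one, and be constant beyond. Then
`E_h(ψₙ) → E_h(φ)`, by dominated convergence in both integrals (`tendsto_energy_cutoff`), so some
`ψₙ` does the job. Pointwise convergence of the integrands is trivial, because at each fixed point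
they are eventually equal to those of `φ`; the content lies in the majorants.

Let `ℓ` be the step function equal to `L-` on `x < 0` and `L+` on `x ≥ 0`. Since `h ≠ 1`, the
wells of `W_h` are nondegenerate (`exists_sq_le_Wpot`), so finite energy forces `φ - ℓ ∈ L²`
(`lintegral_sub_stepLim_sq_ne_top`). Uniformly in `n`, `|ψₙ - ℓ| ≤ |φ - ℓ|` and
`|ψₙ'| ≤ |φ'| + C |φ - ℓ|`, and `2 W_h(ψₙ) ≤ (1 + h) (ψₙ - ℓ)²`, which handles the local terms.

For the stray-field term, substitute `t = s + h`. When `|h| ≤ 1`, the squared difference quotient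
of `cos ψₙ` is at most the mean of `(ψₙ')²` over the segment (`sq_slope_le_lintegral`); when
`|h| > 1`, use `|cos ψₙ - k| ≤ |φ - ℓ|` and the integrability of `1/(1 + h²)`. The resulting
majorant `strayBound` is integrable by Tonelli (`lintegral_strayBound_ne_top`).
-/

open Real MeasureTheory Filter Topology
open scoped ENNReal NNReal

noncomputable section

/-- `k = min {h, 1}`. -/
def kparam (h : ℝ) : ℝ := min h 1

/-- `α = arccos k ∈ [0, π/2]`. -/
def alphaParam (h : ℝ) : ℝ := Real.arccos (kparam h)

/-- The anisotropy potential `W_h(θ) = (1/2)(cos²θ − 2h cos θ + 2hk − k²)`. -/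
def Wpot (h θ : ℝ) : ℝ :=
  (1/2) * ((Real.cos θ)^2 - 2*h*Real.cos θ + 2*h*(kparam h) - (kparam h)^2)

/-- The set `2πℤ + {−α, α}` of allowed limits at `±∞`. -/
def limSet (h : ℝ) : Set ℝ :=
  {y | ∃ n : ℤ, y = 2*Real.pi*n + alphaParam h ∨ y = 2*Real.pi*n - alphaParam h}

/-- The total energy `E_h(φ)`, valued in `[0, ∞]`:
exchange + anisotropy energy plus the stray-field (homogeneous `H^{1/2}`) energy. -/
def energy (h : ℝ) (φ : ℝ → ℝ) : ℝ≥0∞ :=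
  ENNReal.ofReal (1/2) *
      (∫⁻ x : ℝ, ENNReal.ofReal ((deriv φ x)^2 + 2 * Wpot h (φ x))) +
    ENNReal.ofReal (1/(4*Real.pi)) *
      (∫⁻ s : ℝ, ∫⁻ t : ℝ,
        ENNReal.ofReal ((Real.cos (φ s) - Real.cos (φ t))^2 / (s - t)^2))

/-- An admissible phase: `C¹`, limits at `±∞` in `2πℤ + {−α, α}`, finite energy. -/
def Admissible (h : ℝ) (φ : ℝ → ℝ) : Prop :=
  ContDiff ℝ 1 φ ∧
    (∃ L ∈ limSet h, Tendsto φ atTop (𝓝 L)) ∧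
    (∃ L ∈ limSet h, Tendsto φ atBot (𝓝 L)) ∧
    energy h φ < ⊤

/-- The winding number `deg(φ) = (φ(+∞) − φ(−∞))/(2π)`. -/
def deg (φ : ℝ → ℝ) : ℝ :=
  (limUnder atTop φ - limUnder atBot φ) / (2*Real.pi)

/-- `𝒜_h(d)`: admissible phases of winding number `d`. -/
def AA (h d : ℝ) : Set (ℝ → ℝ) := {φ | Admissible h φ ∧ deg φ = d}

/-- `ℰ_h(d) = inf {E_h(φ) : φ ∈ 𝒜_h(d)}`. -/
def Einf (h d : ℝ) : ℝ≥0∞ := ⨅ φ ∈ AA h d, energy h φ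

/-- `D_α = {n + j·α/π : n ∈ ℤ, j ∈ {−1, 0, 1}}`. -/
def Dset (h : ℝ) : Set ℝ :=
  {d | ∃ n j : ℤ, (j = -1 ∨ j = 0 ∨ j = 1) ∧ d = n + j * alphaParam h / Real.pi}

/-! ### The wells of the anisotropy potential -/

lemma cos_of_mem_limSet {h : ℝ} (h0 : 0 ≤ h) {L : ℝ} (hL : L ∈ limSet h) :
    Real.cos L = kparam h := by
  have hk : Real.cos (alphaParam h) = kparam h :=
    Real.cos_arccos (by have : 0 ≤ kparam h := le_min h0 zero_le_one
                        linarith) (min_le_right _ _)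
  obtain ⟨n, rfl | rfl⟩ := hL
  · rw [← hk, show 2 * Real.pi * n + alphaParam h = alphaParam h + n * (2 * Real.pi) by ring,
      Real.cos_add_int_mul_two_pi]
  · rw [← hk, show 2 * Real.pi * n - alphaParam h = -alphaParam h + n * (2 * Real.pi) by ring,
      Real.cos_add_int_mul_two_pi, Real.cos_neg]

lemma Wpot_nonneg {h : ℝ} (θ : ℝ) : 0 ≤ Wpot h θ := by
  unfold Wpot kparam
  have := Real.cos_le_one θ
  rcases le_total h 1 with hh | hh
  · rw [min_eq_left hh]; nlinarith [sq_nonneg (Real.cos θ - h)]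
  · rw [min_eq_right hh]; nlinarith

/-- For `1 ≤ h` the wells are exactly the multiples of `2π`, so shifting by a well leaves the
cosine unchanged. -/
lemma cos_sub_of_mem_limSet {h : ℝ} (hh : 1 ≤ h) {L : ℝ} (hL : L ∈ limSet h) (θ : ℝ) :
    Real.cos (θ - L) = Real.cos θ := by
  have hα : alphaParam h = 0 := by simp [alphaParam, kparam, min_eq_right hh]
  have : ∃ n : ℤ, L = n * (2 * Real.pi) := by
    obtain ⟨n, hn | hn⟩ := hL <;> exact ⟨n, by rw [hn, hα]; ring⟩
  obtain ⟨n, rfl⟩ := this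
  rw [Real.cos_sub_int_mul_two_pi]

lemma two_Wpot_le {h : ℝ} (h0 : 0 ≤ h) {L : ℝ} (hL : L ∈ limSet h) (θ : ℝ) :
    2 * Wpot h θ ≤ (1 + h) * (θ - L) ^ 2 := by
  have hc := cos_of_mem_limSet h0 hL
  rcases le_total h 1 with hh | hh
  · have hk : kparam h = h := min_eq_left hh
    rw [hk] at hc
    have h2 : (Real.cos θ - h) ^ 2 ≤ (θ - L) ^ 2 := by
      rw [← hc]; exact sq_le_sq.2 (Real.abs_cos_sub_cos_le θ L)
    unfold Wpot
    rw [hk]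
    nlinarith [mul_nonneg h0 (sq_nonneg (θ - L))]
  · have hk : kparam h = 1 := min_eq_right hh
    have h3 := cos_sub_of_mem_limSet hh hL θ
    have h4 := @Real.one_sub_sq_div_two_le_cos (θ - L)
    rw [h3] at h4
    have h5 := Real.neg_one_le_cos θ
    have h6 := Real.cos_le_one θ
    unfold Wpot
    rw [hk]
    nlinarith [sq_nonneg (θ - L)]

/-- The wells of `W_h` are nondegenerate when `h ≠ 1`: for `h < 1` because `cos` has nonzero
derivative there, for `h > 1` because of the linear term `(h - 1)(1 - cos θ)`. -/
lemma exists_sq_le_Wpot {h : ℝ} (h0 : 0 ≤ h) (h1 : h ≠ 1) {L : ℝ} (hL : L ∈ limSet h) :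
    ∃ c : ℝ, 0 ≤ c ∧ ∀ᶠ θ in 𝓝 L, (θ - L) ^ 2 ≤ c * (2 * Wpot h θ) := by
  have hc := cos_of_mem_limSet h0 hL
  rcases lt_or_gt_of_ne h1 with hh | hh
  · have hk : kparam h = h := min_eq_left hh.le
    rw [hk] at hc
    have hs : 0 < Real.sin L ^ 2 := by nlinarith [Real.sin_sq_add_cos_sq L]
    have hs' : 0 < |Real.sin L| := by
      rw [abs_pos]; rintro h; simp [h] at hs
    have hd := (Real.hasDerivAt_cos L).isLittleO.def (half_pos hs')
    refine ⟨4 / Real.sin L ^ 2, by positivity, hd.mono fun θ hθ => ?_⟩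
    simp only [Real.norm_eq_abs, smul_eq_mul] at hθ
    have h2 : |Real.sin L| / 2 * |θ - L| ≤ |Real.cos θ - Real.cos L| := by
      have h3 : |(θ - L) * -Real.sin L| = |Real.sin L| * |θ - L| := by
        rw [abs_mul, abs_neg, mul_comm]
      have h4 := abs_sub_abs_le_abs_sub ((θ - L) * -Real.sin L) (Real.cos θ - Real.cos L)
      rw [abs_sub_comm ((θ - L) * -Real.sin L)] at h4
      linarith
    have h5 := pow_le_pow_left₀ (by positivity) h2 2
    rw [mul_pow, div_pow, sq_abs, sq_abs, sq_abs, hc] at h5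
    have h6 : 2 * Wpot h θ = (Real.cos θ - h) ^ 2 := by unfold Wpot; rw [hk]; ring
    rw [h6, div_mul_eq_mul_div, le_div_iff₀ hs]
    linarith
  · have hk : kparam h = 1 := min_eq_right hh.le
    refine ⟨Real.pi ^ 2 / (4 * (h - 1)), div_nonneg (by positivity) (by linarith), ?_⟩
    filter_upwards [Metric.ball_mem_nhds L Real.pi_pos] with θ hθ
    rw [Metric.mem_ball, Real.dist_eq] at hθ
    have h3 := cos_sub_of_mem_limSet hh.le hL θ
    have h4 := Real.cos_le_one_sub_mul_cos_sq hθ.le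
    rw [h3] at h4
    have h6 := Real.cos_le_one θ
    have h7 : 2 * (h - 1) * (1 - Real.cos θ) ≤ 2 * Wpot h θ := by
      unfold Wpot; rw [hk]; nlinarith [sq_nonneg (1 - Real.cos θ)]
    have h8 : 0 < h - 1 := by linarith
    rw [div_mul_eq_mul_div, le_div_iff₀ (by linarith)]
    have h9 : 2 * (θ - L) ^ 2 ≤ Real.pi ^ 2 * (1 - Real.cos θ) := by
      have : 2 / Real.pi ^ 2 * (θ - L) ^ 2 ≤ 1 - Real.cos θ := by linarith
      rw [div_mul_eq_mul_div, div_le_iff₀ (by positivity)] at this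
      linarith
    nlinarith [mul_le_mul_of_nonneg_left h7 (sq_nonneg Real.pi),
      mul_le_mul_of_nonneg_left h9 h8.le]

/-! ### Cutting off the tails of a phase -/

lemma exists_deriv_smoothTransition_bound :
    ∃ C : ℝ, 0 ≤ C ∧ ∀ x, |deriv Real.smoothTransition x| ≤ C := by
  have hT : ContDiff ℝ 1 Real.smoothTransition := Real.smoothTransition.contDiff (n := 1)
  obtain ⟨C, hC⟩ := (isCompact_Icc (a := (0:ℝ)) (b := 1)).exists_bound_of_continuousOn
    (hT.continuous_deriv le_rfl).continuousOn
  refine ⟨max C 0, le_max_right _ _, fun x => ?_⟩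
  rcases le_total x 0 with hx | hx
  · have : IsLocalMin Real.smoothTransition x := Filter.Eventually.of_forall fun y => by
      rw [Real.smoothTransition.zero_of_nonpos hx]; exact Real.smoothTransition.nonneg y
    rw [this.deriv_eq_zero]; simp
  rcases le_total 1 x with hx' | hx'
  · have : IsLocalMax Real.smoothTransition x := Filter.Eventually.of_forall fun y => by
      rw [Real.smoothTransition.one_of_one_le hx']; exact Real.smoothTransition.le_one y
    rw [this.deriv_eq_zero]; simp
  · exact (hC x ⟨hx, hx'⟩).trans (le_max_left _ _)

/-- The phase `φ` with its tails replaced by the constants `Lm` on `(-∞, -(n+1)]` and `Lp` on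
`[n+1, ∞)`, unchanged on `[-n, n]`. -/
def cutoff (φ : ℝ → ℝ) (Lp Lm : ℝ) (n : ℕ) (x : ℝ) : ℝ :=
  φ x + Real.smoothTransition (x - n) * (Lp - φ x) +
    Real.smoothTransition (-x - n) * (Lm - φ x)

/-- The step function equal to the limit of the phase on each side. -/
def stepLim (Lp Lm x : ℝ) : ℝ := if 0 ≤ x then Lp else Lm

section cutoff
variable {φ : ℝ → ℝ} {Lp Lm : ℝ}

lemma cutoff_contDiff (hφ : ContDiff ℝ 1 φ) (n : ℕ) : ContDiff ℝ 1 (cutoff φ Lp Lm n) := by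
  have hT : ContDiff ℝ 1 Real.smoothTransition := Real.smoothTransition.contDiff (n := 1)
  unfold cutoff
  exact (hφ.add ((hT.comp (contDiff_id.sub contDiff_const)).mul (contDiff_const.sub hφ))).add
    ((hT.comp (contDiff_id.neg.sub contDiff_const)).mul (contDiff_const.sub hφ))

lemma cutoff_eq_right {n : ℕ} {x : ℝ} (hx : (n : ℝ) + 1 ≤ x) : cutoff φ Lp Lm n x = Lp := by
  have hn : (0:ℝ) ≤ n := n.cast_nonneg
  rw [cutoff, Real.smoothTransition.one_of_one_le (by linarith),
    Real.smoothTransition.zero_of_nonpos (by linarith)]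
  ring

lemma cutoff_eq_left {n : ℕ} {x : ℝ} (hx : x ≤ -((n : ℝ) + 1)) :
    cutoff φ Lp Lm n x = Lm := by
  have hn : (0:ℝ) ≤ n := n.cast_nonneg
  rw [cutoff, Real.smoothTransition.zero_of_nonpos (x := x - n) (by linarith),
    Real.smoothTransition.one_of_one_le (by linarith)]
  ring

lemma cutoff_eq_self {n : ℕ} {x : ℝ} (hx : |x| ≤ n) : cutoff φ Lp Lm n x = φ x := by
  obtain ⟨h1, h2⟩ := abs_le.1 hx
  rw [cutoff, Real.smoothTransition.zero_of_nonpos (x := x - n) (by linarith),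
    Real.smoothTransition.zero_of_nonpos (by linarith)]
  ring

lemma cutoff_eventuallyEq {n : ℕ} {x : ℝ} (hx : |x| < n) : cutoff φ Lp Lm n =ᶠ[𝓝 x] φ :=
  (continuous_abs.continuousAt.eventually (gt_mem_nhds hx)).mono
    fun _ hy => cutoff_eq_self (le_of_lt hy)

lemma cutoff_sub_stepLim (n : ℕ) (x : ℝ) :
    (cutoff φ Lp Lm n x - stepLim Lp Lm x) ^ 2 ≤ (φ x - stepLim Lp Lm x) ^ 2 := by
  have hn : (0:ℝ) ≤ n := n.cast_nonneg
  have key : ∀ t u : ℝ, 0 ≤ t → t ≤ 1 → ((1 - t) * u) ^ 2 ≤ u ^ 2 := fun t u h0 h1 => by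
    rw [mul_pow]; exact mul_le_of_le_one_left (sq_nonneg u) (by nlinarith)
  unfold stepLim
  split_ifs with hx
  · convert key (Real.smoothTransition (x - n)) (φ x - Lp)
      (Real.smoothTransition.nonneg _) (Real.smoothTransition.le_one _) using 2
    rw [cutoff, Real.smoothTransition.zero_of_nonpos (x := -x - n) (by linarith)]
    ring
  · convert key (Real.smoothTransition (-x - n)) (φ x - Lm)
      (Real.smoothTransition.nonneg _) (Real.smoothTransition.le_one _) using 2
    rw [cutoff, Real.smoothTransition.zero_of_nonpos (x := x - n) (by linarith)]
    ring

lemma deriv_cutoff_sq_le (hφ : ContDiff ℝ 1 φ) {C : ℝ}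
    (hC : ∀ x, |deriv Real.smoothTransition x| ≤ C) (n : ℕ) (x : ℝ) :
    (deriv (cutoff φ Lp Lm n) x) ^ 2 ≤
      2 * (deriv φ x) ^ 2 + 2 * C ^ 2 * (φ x - stepLim Lp Lm x) ^ 2 := by
  have hn : (0:ℝ) ≤ n := n.cast_nonneg
  have hT : Differentiable ℝ Real.smoothTransition :=
    (Real.smoothTransition.contDiff (n := 1)).differentiable (by simp)
  have hd : HasDerivAt φ (deriv φ x) x := (hφ.differentiable (by simp) x).hasDerivAt
  have hp : HasDerivAt (fun y : ℝ => Real.smoothTransition (y - n))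
      (deriv Real.smoothTransition (x - n)) x := by
    have := (hT (x - n)).hasDerivAt.comp x ((hasDerivAt_id' x).sub_const (n:ℝ))
    rwa [mul_one] at this
  have hm : HasDerivAt (fun y : ℝ => Real.smoothTransition (-y - n))
      (-deriv Real.smoothTransition (-x - n)) x := by
    have := (hT (-x - n)).hasDerivAt.comp x ((hasDerivAt_id' x).neg.sub_const (n:ℝ))
    rwa [mul_neg_one] at this
  have hD := ((hd.add (hp.mul (hd.const_sub Lp))).add (hm.mul (hd.const_sub Lm))).deriv
  have hz : ∀ y ≤ (0:ℝ), deriv Real.smoothTransition y = 0 := fun y hy =>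
    IsLocalMin.deriv_eq_zero (Filter.Eventually.of_forall fun z => by
      rw [Real.smoothTransition.zero_of_nonpos hy]; exact Real.smoothTransition.nonneg z)
  have key : ∀ t D u v : ℝ, 0 ≤ t → t ≤ 1 → |D| ≤ C →
      ((1 - t) * v + D * u) ^ 2 ≤ 2 * v ^ 2 + 2 * C ^ 2 * u ^ 2 := fun t D u v h0 h1 hD => by
    have h2 : ((1 - t) * v) ^ 2 ≤ v ^ 2 := by
      rw [mul_pow]; exact mul_le_of_le_one_left (sq_nonneg v) (by nlinarith)
    have h3 : (D * u) ^ 2 ≤ C ^ 2 * u ^ 2 := by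
      rw [mul_pow, ← sq_abs D]
      exact mul_le_mul_of_nonneg_right (pow_le_pow_left₀ (abs_nonneg _) hD 2) (sq_nonneg u)
    nlinarith [sq_nonneg ((1 - t) * v - D * u)]
  change deriv (cutoff φ Lp Lm n) x = _ at hD
  rw [hD]
  unfold stepLim
  split_ifs with hx
  · convert key (Real.smoothTransition (x - n)) (-deriv Real.smoothTransition (x - n))
      (φ x - Lp) (deriv φ x) (Real.smoothTransition.nonneg _) (Real.smoothTransition.le_one _)
      (by rw [abs_neg]; exact hC _) using 2
    rw [Real.smoothTransition.zero_of_nonpos (x := -x - n) (by linarith),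
      hz (-x - n) (by linarith)]
    ring
  · convert key (Real.smoothTransition (-x - n)) (deriv Real.smoothTransition (-x - n))
      (φ x - Lm) (deriv φ x) (Real.smoothTransition.nonneg _) (Real.smoothTransition.le_one _)
      (hC _) using 2
    rw [Real.smoothTransition.zero_of_nonpos (x := x - n) (by linarith),
      hz (x - n) (by linarith)]
    ring

end cutoff

/-! ### An integrable majorant for the stray-field integrand -/

lemma sq_integral_le {p : ℝ → ℝ} (hp : Continuous p) :
    (∫ τ in (0:ℝ)..1, p τ) ^ 2 ≤ ∫ τ in (0:ℝ)..1, p τ ^ 2 := by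
  set m := ∫ τ in (0:ℝ)..1, p τ with hm
  have h1 : 0 ≤ ∫ τ in (0:ℝ)..1, (p τ - m) ^ 2 :=
    intervalIntegral.integral_nonneg zero_le_one fun _ _ => sq_nonneg _
  have h2 : ∫ τ in (0:ℝ)..1, (p τ - m) ^ 2 = (∫ τ in (0:ℝ)..1, p τ ^ 2) - m ^ 2 := by
    have : ∀ τ, (p τ - m) ^ 2 = p τ ^ 2 - (2 * m * p τ - m ^ 2) := fun τ => by ring
    simp_rw [this]
    have i1 : IntervalIntegrable (fun τ => p τ ^ 2) volume 0 1 :=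
      (hp.pow 2).intervalIntegrable _ _
    have i2 : IntervalIntegrable (fun τ => 2 * m * p τ) volume 0 1 :=
      (continuous_const.mul hp).intervalIntegrable _ _
    have i3 : IntervalIntegrable (fun _ => m ^ 2) volume (0:ℝ) 1 :=
      continuous_const.intervalIntegrable _ _
    rw [intervalIntegral.integral_sub i1 (i2.sub i3), intervalIntegral.integral_sub i2 i3,
      intervalIntegral.integral_const_mul, ← hm]
    simp
    ring
  linarith

/-- Squared difference quotients are bounded by the mean of `(f')²` over the segment: the
fundamental theorem of calculus followed by Jensen's inequality. -/
lemma sq_slope_le_lintegral {f : ℝ → ℝ} (hf : ContDiff ℝ 1 f) (s h : ℝ) :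
    ENNReal.ofReal ((f s - f (s + h)) ^ 2 / (s - (s + h)) ^ 2) ≤
      ∫⁻ τ in Set.Ioc (0:ℝ) 1, ENNReal.ofReal ((deriv f (s + τ * h)) ^ 2) := by
  rcases eq_or_ne h 0 with rfl | hh
  · simp
  have hc : Continuous fun τ : ℝ => deriv f (s + τ * h) :=
    (hf.continuous_deriv le_rfl).comp (by fun_prop)
  have h1 := intervalIntegral.integral_unitInterval_deriv_eq_sub (𝕜 := ℝ) (f := f)
    (f' := deriv f) (z₀ := s) (z₁ := h) (by simpa only [smul_eq_mul] using hc.continuousOn)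
    (fun t _ => (hf.differentiable (by simp) _).hasDerivAt)
  simp only [smul_eq_mul] at h1
  have h2 : (f s - f (s + h)) ^ 2 / (s - (s + h)) ^ 2 =
      (∫ τ in (0:ℝ)..1, deriv f (s + τ * h)) ^ 2 := by
    rw [div_eq_iff (by simpa using hh)]
    linear_combination (f s - f (s + h) - h * ∫ τ in (0:ℝ)..1, deriv f (s + τ * h)) * h1
  have h3 : Integrable (fun τ : ℝ => deriv f (s + τ * h) ^ 2)
      (volume.restrict (Set.Ioc (0:ℝ) 1)) :=
    ((hc.pow 2).integrableOn_Icc (a := 0) (b := 1)).mono_set Set.Ioc_subset_Icc_self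
  rw [h2, ← ofReal_integral_eq_lintegral_ofReal h3 (ae_of_all _ fun _ => sq_nonneg _),
    ← intervalIntegral.integral_of_le zero_le_one]
  exact ENNReal.ofReal_le_ofReal (sq_integral_le hc)

/-- Majorant of the stray-field integrand at `(s, s + h)`: for `|h| ≤ 1` it uses the bound `g` on
the squared derivative, for `|h| > 1` the bound `v` on the squared distance to the limit value. -/
def strayBound (g v : ℝ → ℝ) (z : ℝ × ℝ) : ℝ≥0∞ :=
  Set.indicator {z : ℝ × ℝ | |z.2| ≤ 1}
      (fun z => ∫⁻ τ in Set.Ioc (0:ℝ) 1, ENNReal.ofReal (g (z.1 + τ * z.2))) z +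
    ENNReal.ofReal (v z.1 + v (z.1 + z.2)) * ENNReal.ofReal (4 * (1 + z.2 ^ 2)⁻¹)

lemma le_strayBound {f g v : ℝ → ℝ} {k : ℝ} (hf : ContDiff ℝ 1 f)
    (hg : ∀ x, deriv f x ^ 2 ≤ g x) (hv : ∀ x, (f x - k) ^ 2 ≤ v x) (z : ℝ × ℝ) :
    ENNReal.ofReal ((f z.1 - f (z.1 + z.2)) ^ 2 / (z.1 - (z.1 + z.2)) ^ 2) ≤
      strayBound g v z := by
  unfold strayBound
  by_cases hz : |z.2| ≤ 1
  · refine le_add_right ?_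
    rw [Set.indicator_of_mem (by exact hz)]
    exact (sq_slope_le_lintegral hf _ _).trans
      (lintegral_mono fun τ => ENNReal.ofReal_le_ofReal (hg _))
  · refine le_add_left ?_
    have hz2 : 1 < z.2 ^ 2 := by
      rw [← sq_abs]; push Not at hz; nlinarith
    have h1 := hv z.1
    have h2 := hv (z.1 + z.2)
    have h3 : 0 ≤ v z.1 + v (z.1 + z.2) :=
      add_nonneg ((sq_nonneg _).trans h1) ((sq_nonneg _).trans h2)
    rw [← ENNReal.ofReal_mul h3]
    apply ENNReal.ofReal_le_ofReal
    have h4 : (z.1 - (z.1 + z.2)) ^ 2 = z.2 ^ 2 := by ring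
    rw [h4, div_le_iff₀ (by linarith)]
    have h5 : 2 ≤ 4 * (1 + z.2 ^ 2)⁻¹ * z.2 ^ 2 := by
      rw [mul_assoc, inv_mul_eq_div, ← mul_div_assoc, le_div_iff₀ (by linarith)]
      linarith
    have h6 := mul_le_mul_of_nonneg_left h5 h3
    nlinarith [sq_nonneg ((f z.1 - k) + (f (z.1 + z.2) - k))]

lemma measurable_strayBound_left {g : ℝ → ℝ} (hg : Measurable g) :
    Measurable (Set.indicator {z : ℝ × ℝ | |z.2| ≤ 1}
      (fun z => ∫⁻ τ in Set.Ioc (0:ℝ) 1, ENNReal.ofReal (g (z.1 + τ * z.2)))) := by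
  refine Measurable.indicator ?_ (measurableSet_le (by fun_prop) measurable_const)
  exact Measurable.lintegral_prod_right'
    (f := fun w : (ℝ × ℝ) × ℝ => ENNReal.ofReal (g (w.1.1 + w.2 * w.1.2))) (by fun_prop)

/-- By Tonelli and translation invariance, the near part costs `2 ∫ g` and the far part a multiple
of `∫ v`. -/
lemma lintegral_strayBound_ne_top {g v : ℝ → ℝ} (hg : Measurable g) (hv : Measurable v)
    (hgi : ∫⁻ x, ENNReal.ofReal (g x) ≠ ⊤) (hvi : ∫⁻ x, ENNReal.ofReal (v x) ≠ ⊤) :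
    ∫⁻ z, strayBound g v z ∂((volume : Measure ℝ).prod volume) ≠ ⊤ := by
  unfold strayBound
  rw [lintegral_add_left (measurable_strayBound_left hg)]
  refine ENNReal.add_ne_top.2 ⟨?_, ?_⟩
  · rw [lintegral_prod_symm _ (measurable_strayBound_left hg).aemeasurable]
    have h1 : ∀ h : ℝ, ∫⁻ s : ℝ, Set.indicator {z : ℝ × ℝ | |z.2| ≤ 1}
        (fun z => ∫⁻ τ in Set.Ioc (0:ℝ) 1, ENNReal.ofReal (g (z.1 + τ * z.2))) (s, h) =
        Set.indicator (Set.Icc (-1:ℝ) 1) (fun _ => ∫⁻ x, ENNReal.ofReal (g x)) h := by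
      intro h
      by_cases hh : |h| ≤ 1
      · rw [Set.indicator_of_mem (by exact abs_le.1 hh)]
        have h2 : ∀ s : ℝ, Set.indicator {z : ℝ × ℝ | |z.2| ≤ 1}
            (fun z => ∫⁻ τ in Set.Ioc (0:ℝ) 1, ENNReal.ofReal (g (z.1 + τ * z.2))) (s, h) =
            ∫⁻ τ in Set.Ioc (0:ℝ) 1, ENNReal.ofReal (g (s + τ * h)) := fun s =>
          Set.indicator_of_mem (by exact hh) _
        simp_rw [h2]
        rw [lintegral_lintegral_swap (by fun_prop)]
        simp_rw [lintegral_add_right_eq_self fun x => ENNReal.ofReal (g x)]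
        simp
      · rw [Set.indicator_of_notMem (by rw [Set.mem_Icc, ← abs_le]; exact hh)]
        have h2 : ∀ s : ℝ, Set.indicator {z : ℝ × ℝ | |z.2| ≤ 1}
            (fun z => ∫⁻ τ in Set.Ioc (0:ℝ) 1, ENNReal.ofReal (g (z.1 + τ * z.2))) (s, h) = 0 :=
          fun s => Set.indicator_of_notMem (by exact hh) _
        simp_rw [h2, lintegral_zero]
    simp_rw [h1]
    rw [lintegral_indicator measurableSet_Icc, setLIntegral_const]
    exact ENNReal.mul_ne_top hgi (by simp)
  · rw [lintegral_prod_symm _ (by fun_prop)]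
    have h1 : ∀ h : ℝ, ∫⁻ s : ℝ, ENNReal.ofReal (v s + v (s + h)) *
        ENNReal.ofReal (4 * (1 + h ^ 2)⁻¹) ≤
        2 * (∫⁻ x, ENNReal.ofReal (v x)) * ENNReal.ofReal (4 * (1 + h ^ 2)⁻¹) := by
      intro h
      rw [lintegral_mul_const _ (by fun_prop)]
      gcongr
      calc ∫⁻ s : ℝ, ENNReal.ofReal (v s + v (s + h))
          ≤ ∫⁻ s : ℝ, (ENNReal.ofReal (v s) + ENNReal.ofReal (v (s + h))) :=
            lintegral_mono fun _ => ENNReal.ofReal_add_le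
        _ = _ := by
            rw [lintegral_add_left (by fun_prop),
              lintegral_add_right_eq_self fun x => ENNReal.ofReal (v x), two_mul]
    refine ne_top_of_le_ne_top ?_ (lintegral_mono h1)
    rw [lintegral_const_mul _ (by fun_prop)]
    refine ENNReal.mul_ne_top (ENNReal.mul_ne_top (by simp) hvi) ?_
    exact (integrable_inv_one_add_sq.const_mul 4).lintegral_lt_top.ne

/-! ### Square integrability of the tails and convergence of the energy -/

lemma measurable_stepLim (Lp Lm : ℝ) : Measurable (stepLim Lp Lm) :=
  Measurable.ite measurableSet_Ici measurable_const measurable_const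

lemma stepLim_mem {h Lp Lm : ℝ} (hp : Lp ∈ limSet h) (hm : Lm ∈ limSet h) (x : ℝ) :
    stepLim Lp Lm x ∈ limSet h := by
  unfold stepLim; split_ifs <;> assumption

lemma continuous_Wpot (h : ℝ) : Continuous (Wpot h) := by
  unfold Wpot; fun_prop

/-- Near `±∞` the potential controls the squared distance to the limit; on a compact interval
this distance is bounded. -/
lemma lintegral_sub_stepLim_sq_ne_top {h : ℝ} (h0 : 0 ≤ h) (h1 : h ≠ 1) {φ : ℝ → ℝ}
    {Lp Lm : ℝ} (hφ : ContDiff ℝ 1 φ) (hp : Lp ∈ limSet h) (hm : Lm ∈ limSet h)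
    (htp : Tendsto φ atTop (𝓝 Lp)) (htm : Tendsto φ atBot (𝓝 Lm))
    (hE : ∫⁻ x, ENNReal.ofReal ((deriv φ x)^2 + 2 * Wpot h (φ x)) ≠ ⊤) :
    ∫⁻ x, ENNReal.ofReal ((φ x - stepLim Lp Lm x) ^ 2) ≠ ⊤ := by
  obtain ⟨cp, hcp, hp'⟩ := exists_sq_le_Wpot h0 h1 hp
  obtain ⟨cm, hcm, hm'⟩ := exists_sq_le_Wpot h0 h1 hm
  obtain ⟨a, ha⟩ := eventually_atTop.1 (htp.eventually hp')
  obtain ⟨b, hb⟩ := eventually_atBot.1 (htm.eventually hm')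
  set R := max |a| |b| with hR
  have hRa : a ≤ R := (le_abs_self a).trans (le_max_left _ _)
  have hRb : -R ≤ b := by have := (neg_abs_le b); have := le_max_right |a| |b|; linarith
  have hR0 : 0 ≤ R := (abs_nonneg a).trans (le_max_left _ _)
  obtain ⟨Bp, hBp⟩ := (isCompact_Icc (a := -R) (b := R)).exists_bound_of_continuousOn
    (f := fun x => (φ x - Lp) ^ 2) ((hφ.continuous.sub continuous_const).pow 2).continuousOn
  obtain ⟨Bm, hBm⟩ := (isCompact_Icc (a := -R) (b := R)).exists_bound_of_continuousOn
    (f := fun x => (φ x - Lm) ^ 2) ((hφ.continuous.sub continuous_const).pow 2).continuousOn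
  have hpt : ∀ x, ENNReal.ofReal ((φ x - stepLim Lp Lm x) ^ 2) ≤
      ENNReal.ofReal (cp + cm) * ENNReal.ofReal ((deriv φ x)^2 + 2 * Wpot h (φ x)) +
        Set.indicator (Set.Icc (-R) R) (fun _ => ENNReal.ofReal (max Bp Bm)) x := by
    intro x
    by_cases hx : x ∈ Set.Icc (-R) R
    · refine le_add_left ?_
      rw [Set.indicator_of_mem hx]
      apply ENNReal.ofReal_le_ofReal
      unfold stepLim
      split_ifs
      · exact ((le_abs_self _).trans (hBp x hx)).trans (le_max_left _ _)
      · exact ((le_abs_self _).trans (hBm x hx)).trans (le_max_right _ _)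
    · refine le_add_right ?_
      rw [← ENNReal.ofReal_mul (by linarith)]
      apply ENNReal.ofReal_le_ofReal
      have hW := Wpot_nonneg (h := h) (φ x)
      have hs : ∀ c, 0 ≤ c → c ≤ cp + cm →
          c * (2 * Wpot h (φ x)) ≤ (cp + cm) * ((deriv φ x)^2 + 2 * Wpot h (φ x)) :=
        fun c _ hc' => mul_le_mul hc' (by linarith [sq_nonneg (deriv φ x)]) (by linarith) (by linarith)
      unfold stepLim
      split_ifs with hx0
      · have hxR : R < x := by
          by_contra hcon; exact hx ⟨by linarith, not_lt.1 hcon⟩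
        exact (ha x (hRa.trans hxR.le)).trans (hs cp hcp (by linarith))
      · have hxR : x < -R := by
          by_contra hcon; exact hx ⟨not_lt.1 hcon, by linarith⟩
        exact (hb x (hxR.le.trans hRb)).trans (hs cm hcm (by linarith))
  have hmeas : Measurable fun x => ENNReal.ofReal ((deriv φ x)^2 + 2 * Wpot h (φ x)) :=
    ((((measurable_deriv φ).pow_const 2).add
      (((continuous_Wpot h).comp hφ.continuous).measurable.const_mul 2))).ennreal_ofReal
  refine ne_top_of_le_ne_top ?_ (lintegral_mono hpt)
  rw [lintegral_add_left (hmeas.const_mul _), lintegral_const_mul _ hmeas,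
    lintegral_indicator measurableSet_Icc, setLIntegral_const]
  exact ENNReal.add_ne_top.2 ⟨ENNReal.mul_ne_top ENNReal.ofReal_ne_top hE,
    ENNReal.mul_ne_top ENNReal.ofReal_ne_top (by simp)⟩

/-- The stray-field double integral in the variables `(s, h)` with `t = s + h`. -/
lemma stray_eq_lintegral_prod {f : ℝ → ℝ} (hf : Continuous f) :
    ∫⁻ s : ℝ, ∫⁻ t : ℝ, ENNReal.ofReal ((f s - f t)^2 / (s - t)^2) =
      ∫⁻ z : ℝ × ℝ, ENNReal.ofReal ((f z.1 - f (z.1 + z.2)) ^ 2 / (z.1 - (z.1 + z.2)) ^ 2)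
        ∂((volume : Measure ℝ).prod volume) := by
  have hm := hf.measurable
  rw [lintegral_prod _ (by fun_prop)]
  refine lintegral_congr fun s => ?_
  exact (lintegral_add_left_eq_self
    (fun t => ENNReal.ofReal ((f s - f t)^2 / (s - t)^2)) s).symm

/-- Dominated convergence: at each fixed point the integrands of `cutoff φ Lp Lm n` agree with
those of `φ` for large `n`. -/
lemma tendsto_energy_cutoff {h : ℝ} (h0 : 0 ≤ h) (h1 : h ≠ 1) {φ : ℝ → ℝ}
    {Lp Lm : ℝ} (hφ : ContDiff ℝ 1 φ) (hp : Lp ∈ limSet h) (hm : Lm ∈ limSet h)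
    (htp : Tendsto φ atTop (𝓝 Lp)) (htm : Tendsto φ atBot (𝓝 Lm))
    (hE : energy h φ < ⊤) :
    Tendsto (fun n => energy h (cutoff φ Lp Lm n)) atTop (𝓝 (energy h φ)) := by
  have hE1 : ∫⁻ x, ENNReal.ofReal ((deriv φ x)^2 + 2 * Wpot h (φ x)) ≠ ⊤ := by
    intro htop
    simp [energy, htop] at hE
  obtain ⟨C, _, hC⟩ := exists_deriv_smoothTransition_bound
  set v : ℝ → ℝ := fun x => (φ x - stepLim Lp Lm x) ^ 2 with hv
  set g : ℝ → ℝ := fun x => 2 * (deriv φ x) ^ 2 + 2 * C ^ 2 * v x with hg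
  have hvm : Measurable v :=
    (hφ.continuous.measurable.sub (measurable_stepLim Lp Lm)).pow_const 2
  have hgm : Measurable g :=
    (((measurable_deriv φ).pow_const 2).const_mul 2).add (hvm.const_mul _)
  have hv0 : ∀ x, 0 ≤ v x := fun x => sq_nonneg _
  have hvi : ∫⁻ x, ENNReal.ofReal (v x) ≠ ⊤ :=
    lintegral_sub_stepLim_sq_ne_top h0 h1 hφ hp hm htp htm hE1
  have hdi : ∫⁻ x, ENNReal.ofReal ((deriv φ x) ^ 2) ≠ ⊤ :=
    ne_top_of_le_ne_top hE1 (lintegral_mono fun x => ENNReal.ofReal_le_ofReal (by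
      have := Wpot_nonneg (h := h) (φ x); linarith))
  have hcomb : ∀ a b : ℝ, 0 ≤ a → 0 ≤ b →
      ∫⁻ x, ENNReal.ofReal (a * (deriv φ x) ^ 2 + b * v x) ≠ ⊤ := by
    intro a b ha hb
    have : ∀ x, ENNReal.ofReal (a * (deriv φ x) ^ 2 + b * v x) =
        ENNReal.ofReal a * ENNReal.ofReal ((deriv φ x) ^ 2) +
          ENNReal.ofReal b * ENNReal.ofReal (v x) := fun x => by
      rw [ENNReal.ofReal_add (mul_nonneg ha (sq_nonneg _)) (mul_nonneg hb (hv0 x)),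
        ENNReal.ofReal_mul ha, ENNReal.ofReal_mul hb]
    simp_rw [this]
    have hdm : Measurable fun x => ENNReal.ofReal ((deriv φ x) ^ 2) :=
      ((measurable_deriv φ).pow_const 2).ennreal_ofReal
    rw [lintegral_add_left (hdm.const_mul _), lintegral_const_mul _ hdm,
      lintegral_const_mul _ hvm.ennreal_ofReal]
    exact ENNReal.add_ne_top.2 ⟨ENNReal.mul_ne_top ENNReal.ofReal_ne_top hdi,
      ENNReal.mul_ne_top ENNReal.ofReal_ne_top hvi⟩
  have hgi : ∫⁻ x, ENNReal.ofReal (g x) ≠ ⊤ := hcomb _ _ (by norm_num) (by positivity)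
  have hψ : ∀ n, ContDiff ℝ 1 (cutoff φ Lp Lm n) := fun n => cutoff_contDiff hφ n
  have hψg : ∀ n x, deriv (cutoff φ Lp Lm n) x ^ 2 ≤ g x := fun n x =>
    deriv_cutoff_sq_le hφ hC n x
  have hψv : ∀ n x, (cutoff φ Lp Lm n x - stepLim Lp Lm x) ^ 2 ≤ v x := fun n x =>
    cutoff_sub_stepLim n x
  have hev : ∀ x : ℝ, ∀ᶠ n : ℕ in atTop, |x| < n := fun x =>
    tendsto_natCast_atTop_atTop.eventually (eventually_gt_atTop |x|)
  have hloc : Tendsto (fun n => ∫⁻ x, ENNReal.ofReal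
        ((deriv (cutoff φ Lp Lm n) x)^2 + 2 * Wpot h (cutoff φ Lp Lm n x))) atTop
      (𝓝 (∫⁻ x, ENNReal.ofReal ((deriv φ x)^2 + 2 * Wpot h (φ x)))) := by
    refine tendsto_lintegral_of_dominated_convergence
      (fun x => ENNReal.ofReal (2 * (deriv φ x) ^ 2 + (2 * C ^ 2 + (1 + h)) * v x))
      (fun n => ?_) (fun n => ae_of_all _ fun x => ?_)
      (hcomb _ _ (by norm_num) (by positivity)) (ae_of_all _ fun x => ?_)
    · exact ((((measurable_deriv _).pow_const 2).add
        (((continuous_Wpot h).comp (hψ n).continuous).measurable.const_mul 2))).ennreal_ofReal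
    · apply ENNReal.ofReal_le_ofReal
      have h2 := two_Wpot_le h0 (stepLim_mem hp hm x) (cutoff φ Lp Lm n x)
      have h3 := mul_le_mul_of_nonneg_left (hψv n x) (by linarith : 0 ≤ 1 + h)
      have h4 := hψg n x
      simp only [hg] at h4
      linarith
    · refine tendsto_const_nhds.congr' ((hev x).mono fun n hn => ?_)
      have he := cutoff_eventuallyEq (φ := φ) (Lp := Lp) (Lm := Lm) hn
      simp only [he.deriv_eq, he.eq_of_nhds]
  have hstray : Tendsto (fun n => ∫⁻ s : ℝ, ∫⁻ t : ℝ, ENNReal.ofReal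
        ((Real.cos (cutoff φ Lp Lm n s) - Real.cos (cutoff φ Lp Lm n t))^2 / (s - t)^2)) atTop
      (𝓝 (∫⁻ s : ℝ, ∫⁻ t : ℝ, ENNReal.ofReal
        ((Real.cos (φ s) - Real.cos (φ t))^2 / (s - t)^2))) := by
    have hcos : ∀ n, ContDiff ℝ 1 fun x => Real.cos (cutoff φ Lp Lm n x) := fun n =>
      Real.contDiff_cos.comp (hψ n)
    rw [stray_eq_lintegral_prod (f := fun x => Real.cos (φ x))
      (Real.continuous_cos.comp hφ.continuous)]
    simp_rw [fun n => stray_eq_lintegral_prod (hcos n).continuous]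
    refine tendsto_lintegral_of_dominated_convergence (strayBound g v) (fun n => ?_)
      (fun n => ae_of_all _ fun z => ?_) (lintegral_strayBound_ne_top hgm hvm hgi hvi)
      (ae_of_all _ fun z => ?_)
    · have := (hψ n).continuous.measurable
      fun_prop
    · refine le_strayBound (k := kparam h) (hcos n) (fun x => ?_) (fun x => ?_) z
      · have hd : deriv (fun x => Real.cos (cutoff φ Lp Lm n x)) x =
            -Real.sin (cutoff φ Lp Lm n x) * deriv (cutoff φ Lp Lm n) x :=
          deriv_cos ((hψ n).differentiable (by simp) x)
        rw [hd, mul_pow]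
        refine (mul_le_of_le_one_left (sq_nonneg _) ?_).trans (hψg n x)
        rw [neg_sq]
        exact Real.sin_sq_le_one _
      · rw [← cos_of_mem_limSet h0 (stepLim_mem hp hm x)]
        exact (sq_le_sq.2 (Real.abs_cos_sub_cos_le _ _)).trans (hψv n x)
    · refine tendsto_const_nhds.congr' ?_
      filter_upwards [hev z.1, hev (z.1 + z.2)] with n hn hn'
      rw [cutoff_eq_self hn.le, cutoff_eq_self hn'.le]
  exact (ENNReal.Tendsto.const_mul hloc (Or.inr ENNReal.ofReal_ne_top)).add
    (ENNReal.Tendsto.const_mul hstray (Or.inr ENNReal.ofReal_ne_top))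

/-! ### Localisation -/

/-- **Localisation.** Any admissible phase can be replaced, at an
arbitrarily small cost in energy, by one of the same degree which is constant near `±∞`. -/
theorem localisation (h : ℝ) (h0 : 0 ≤ h) (h1 : h ≠ 1) (ε : ℝ) (hε : 0 < ε)
    (d : ℝ) (hd : d ∈ Dset h) (φ : ℝ → ℝ) (hφ : φ ∈ AA h d) :
    ∃ ψ ∈ AA h d, ∃ R : ℝ, 0 < R ∧
      energy h ψ ≤ energy h φ + ENNReal.ofReal ε ∧
      (∀ x y : ℝ, x ≤ -R → y ≤ -R → ψ x = ψ y) ∧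
      (∀ x y : ℝ, R ≤ x → R ≤ y → ψ x = ψ y) := by
  obtain ⟨⟨hC1, ⟨Lp, hp, htp⟩, ⟨Lm, hm, htm⟩, hE⟩, hdeg⟩ := hφ
  have hlt : energy h φ < energy h φ + ENNReal.ofReal ε :=
    ENNReal.lt_add_right hE.ne (ENNReal.ofReal_pos.2 hε).ne'
  obtain ⟨n, hn⟩ :=
    ((tendsto_energy_cutoff h0 h1 hC1 hp hm htp htm hE).eventually_lt_const hlt).exists
  have htp' : Tendsto (cutoff φ Lp Lm n) atTop (𝓝 Lp) :=
    tendsto_const_nhds.congr' ((eventually_ge_atTop ((n:ℝ) + 1)).mono fun _ hx =>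
      (cutoff_eq_right hx).symm)
  have htm' : Tendsto (cutoff φ Lp Lm n) atBot (𝓝 Lm) :=
    tendsto_const_nhds.congr' ((eventually_le_atBot (-((n:ℝ) + 1))).mono fun _ hx =>
      (cutoff_eq_left hx).symm)
  refine ⟨cutoff φ Lp Lm n, ⟨⟨cutoff_contDiff hC1 n, ⟨Lp, hp, htp'⟩, ⟨Lm, hm, htm'⟩,
    hn.trans (ENNReal.add_lt_top.2 ⟨hE, ENNReal.ofReal_lt_top⟩)⟩, ?_⟩, (n:ℝ) + 1,
    by positivity, hn.le, fun x y hx hy => ?_, fun x y hx hy => ?_⟩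
  · rw [← hdeg, deg, deg, htp'.limUnder_eq, htm'.limUnder_eq, htp.limUnder_eq, htm.limUnder_eq]
  · rw [cutoff_eq_left hx, cutoff_eq_left hy]
  · rw [cutoff_eq_right hx, cutoff_eq_right hy]
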